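/- Let f: ℂ^{n+1} → ℂ be a reduced polynomial whose peripheral complex R• is a torsion Γ-module complex, and let e(t) = det(ρ) be the determinant of the invertible matrix ρ appearing in the four-term exact sequence 0 → Γ^μ →ρ Γ^μ ⊕ \overline{H_n(U^c)} → H_n(M^c) → H_n(U^c) → 0. Then, up to multiplication by units of Γ, e(t) · δ_n(U,t) · δ_n(U,t^{-1}) = δ_n(M,t). -/

import Mathlib

/-!
The order of a finitely generated torsion module over a PID is multiplicative in short exact
sequences, because it can be read off from an additive invariant: for a prime `π`, the exponent of
`π` in the order of `M` is the length `locLength π M` of the localization of `M` at `(π)`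
(`locLength_of_equiv_pi`). Localization is exact and length is additive, so `locLength π` is
additive (`locLength_add`).

The four-term sequence splits into the short exact sequences
`0 → X → H_n(M^c) → H_n(U^c) → 0` and `0 → \overline{H_n(U^c)} → X → coker ρ → 0`, where `X` is
the cokernel of `(ρ, τ)`; injectivity of `ρ` gives the exactness of the second one on the left.
By the Smith normal form, `coker ρ` has order `det ρ` (`exists_coker_decomp`), and conjugation
turns `Γ/(d)` into `Γ/(\overline d)` (`IsOrder.conj`). Hence both sides of the claim have the same
`π`-adic valuation for every prime `π` of the PID `Γ`, so they are associated.
-/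


/-!
STATEMENT 4. Let `f : ℂ^{n+1} → ℂ` be a reduced polynomial whose peripheral complex `R•`
is a torsion `Γ`-module complex, and let `e(t) = det(ρ)` be the determinant of the
invertible matrix `ρ` appearing in the four-term exact sequence
`0 → Γ^μ →ρ Γ^μ ⊕ \overline{H_n(U^c)} → H_n(M^c) → H_n(U^c) → 0`.
Then, up to multiplication by units of `Γ`:
`e(t) · δ_n(U,t) · δ_n(U,t⁻¹) = δ_n(M,t)`.
-/

noncomputable section

open LaurentPolynomial

/-- The ring `Γ = ℚ[t,t⁻¹]` of rational Laurent polynomials; `t = T 1`. -/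
abbrev Γ : Type := LaurentPolynomial ℚ

/-- A module over `Γ = ℚ[t,t⁻¹]`, packaging e.g. an Alexander module. -/
structure GammaMod : Type 1 where
  carrier : Type
  [isAddCommGroup : AddCommGroup carrier]
  [isModule : Module Γ carrier]

attribute [instance] GammaMod.isAddCommGroup GammaMod.isModule

/-- The involution `t ↦ t⁻¹` of `Γ = ℚ[t,t⁻¹]`. -/
def gammaBar : Γ ≃ₐ[ℚ] Γ := LaurentPolynomial.invert

/-- `Conj N` is the `Γ`-module `\overline{N}`: the abelian group `N` with the `Γ`-action
composed with the involution `t ↦ t⁻¹`. -/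
def Conj (N : Type) : Type := N

instance (N : Type) [AddCommGroup N] : AddCommGroup (Conj N) :=
  inferInstanceAs (AddCommGroup N)

instance (N : Type) [AddCommGroup N] [Module Γ N] : Module Γ (Conj N) :=
  Module.compHom N (gammaBar.toRingEquiv.toRingHom)

/-- `IsOrder M g` : the finitely generated torsion `Γ`-module `M` admits a decomposition
into nonzero cyclic torsion modules `Γ/(d_i)` with `g = ∏ d_i`; i.e. `g` is the order
(the Alexander polynomial) of `M`, well defined up to units of `Γ`. -/
def IsOrder (M : Type) [AddCommGroup M] [Module Γ M] (g : Γ) : Prop :=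
  ∃ (k : ℕ) (dd : Fin k → Γ), (∀ i, dd i ≠ 0) ∧
    Nonempty (M ≃ₗ[Γ] ((i : Fin k) → Γ ⧸ Ideal.span ({dd i} : Set Γ))) ∧ g = ∏ i, dd i

/-- The topological setup attached to a reduced polynomial `f : ℂ^{n+1} → ℂ` of degree `d`:
the middle Alexander modules `H_n(U^c;ℚ)` and `H_n(M^c;ℚ)`, the Euler characteristic of
`U`, and the (black-box) property that the peripheral complex of `f` is `Γ`-torsion. -/
structure BoundarySetup (n d : ℕ) where
  /-- the defining polynomial `f` in `n+1` complex variables -/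
  f : MvPolynomial (Fin (n + 1)) ℂ
  /-- `f` is reduced -/
  f_reduced : Squarefree f
  /-- `f` has degree `d` -/
  f_degree : f.totalDegree = d
  /-- the Alexander module `H_n(U^c; ℚ)` of the hypersurface complement -/
  HUn : GammaMod
  /-- the Alexander module `H_n(M^c; ℚ)` of the boundary manifold -/
  HMn : GammaMod
  /-- the Euler characteristic `χ(U)` of the complement `U` -/
  chiU : ℤ
  /-- the statement "the peripheral complex `R•` of `f` is a torsion `Γ`-module complex" -/
  peripheralTorsion : Prop

/-! ### Length after localization at a prime -/

/-- The length of the localization of `M` at the prime ideal `(π)`. The length is taken over `R`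
rather than over the local ring; over a PID this gives the same value for torsion modules. -/
def locLength {R : Type*} [CommRing R] {π : R} (hπ : Prime π) (M : Type*) [AddCommGroup M]
    [Module R M] : ℕ∞ :=
  haveI : (Ideal.span {π}).IsPrime := (Ideal.span_singleton_prime hπ.ne_zero).2 hπ
  Module.length R (LocalizedModule (Ideal.span {π}).primeCompl M)

section LocLength

variable {R : Type*} [CommRing R] {π : R} (hπ : Prime π)
variable {M N P : Type*} [AddCommGroup M] [Module R M] [AddCommGroup N] [Module R N]
  [AddCommGroup P] [Module R P]

theorem locLength_add (f : N →ₗ[R] M) (g : M →ₗ[R] P) (hf : Function.Injective f)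
    (hg : Function.Surjective g) (H : Function.Exact f g) :
    locLength hπ M = locLength hπ N + locLength hπ P := by
  have : (Ideal.span {π}).IsPrime := (Ideal.span_singleton_prime hπ.ne_zero).2 hπ
  set S := (Ideal.span {π}).primeCompl
  exact Module.length_eq_add_of_exact
    (IsLocalizedModule.map S (LocalizedModule.mkLinearMap S N) (LocalizedModule.mkLinearMap S M) f)
    (IsLocalizedModule.map S (LocalizedModule.mkLinearMap S M) (LocalizedModule.mkLinearMap S P) g)
    (IsLocalizedModule.map_injective S _ _ f hf) (IsLocalizedModule.map_surjective S _ _ g hg)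
    (IsLocalizedModule.map_exact S _ _ _ f g H)

theorem locLength_eq_zero (h : ∀ m : M, ∃ r : R, ¬ π ∣ r ∧ r • m = 0) : locLength hπ M = 0 := by
  have : (Ideal.span {π}).IsPrime := (Ideal.span_singleton_prime hπ.ne_zero).2 hπ
  refine Module.length_eq_zero_iff.2 (LocalizedModule.subsingleton_iff.2 fun m => ?_)
  obtain ⟨r, hr, hm⟩ := h m
  exact ⟨r, fun hmem => hr (Ideal.mem_span_singleton.1 hmem), hm⟩

theorem locLength_congr (e : M ≃ₗ[R] N) : locLength hπ M = locLength hπ N := by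
  have h0 : locLength hπ PUnit = 0 :=
    locLength_eq_zero (R := R) hπ fun m => ⟨1, hπ.not_dvd_one, rfl⟩
  have := locLength_add hπ e.toLinearMap (0 : N →ₗ[R] PUnit) e.injective
    (fun _ => ⟨0, rfl⟩) (fun x => ⟨fun _ => e.surjective x, fun _ => rfl⟩)
  rw [this, h0, add_zero]

theorem locLength_pi {ι : Type*} [Fintype ι] (A : ι → Type*) [∀ i, AddCommGroup (A i)]
    [∀ i, Module R (A i)] : locLength hπ (∀ i, A i) = ∑ i, locLength hπ (A i) := by
  have : (Ideal.span {π}).IsPrime := (Ideal.span_singleton_prime hπ.ne_zero).2 hπ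
  set S := (Ideal.span {π}).primeCompl
  have e := IsLocalizedModule.iso S
    (LinearMap.pi fun i => LocalizedModule.mkLinearMap S (A i) ∘ₗ LinearMap.proj i)
  exact e.length_eq.trans (Module.length_pi_of_fintype R _)

open scoped Pointwise in
theorem locLength_quot_mul [IsDomain R] {a b : R} (hb : b ≠ 0) :
    locLength hπ (R ⧸ Ideal.span {a * b}) =
      locLength hπ (R ⧸ Ideal.span {a}) + locLength hπ (R ⧸ Ideal.span {b}) := by
  have := locLength_add hπ (Ideal.mulQuot b (Ideal.span {a}))
    (Ideal.quotOfMul b (Ideal.span {a}))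
    (Ideal.mulQuot_injective (Ideal.span {a}) (mem_nonZeroDivisors_of_ne_zero hb))
    (Ideal.quotOfMul_surjective (Ideal.span {a}))
    (Ideal.exact_mulQuot_quotOfMul (Ideal.span {a}))
  rw [← this]
  have lem : ({b} : Set R) • Ideal.span {a} = Ideal.span {b * a} := by
    simp [← Ideal.submodule_span_eq, Submodule.set_smul_span]
  rw [Submodule.singleton_set_smul (Ideal.span {a}) b] at lem
  rw [lem, mul_comm]

/-- The residue field `R/(π)` is already local at `(π)`, so its localized length is its length. -/
theorem locLength_quot_self [IsDomain R] [IsPrincipalIdealRing R] :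
    locLength hπ (R ⧸ Ideal.span {π}) = 1 := by
  have : (Ideal.span {π}).IsPrime := (Ideal.span_singleton_prime hπ.ne_zero).2 hπ
  have : (Ideal.span {π}).IsMaximal :=
    PrincipalIdealRing.isMaximal_of_irreducible hπ.irreducible
  set S := (Ideal.span {π}).primeCompl
  have : IsLocalizedModule S (LinearMap.id : (R ⧸ Ideal.span {π}) →ₗ[R] R ⧸ Ideal.span {π}) := by
    refine ⟨fun s => ?_, fun y => ⟨(y, 1), by simp⟩, fun h => ⟨1, by simpa using h⟩⟩
    have hs : (Ideal.Quotient.mk (Ideal.span {π}) (s : R)) ≠ 0 := fun h =>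
      s.2 (Ideal.Quotient.eq_zero_iff_mem.1 h)
    let _ := Ideal.Quotient.field (Ideal.span {π})
    refine (Module.End.isUnit_iff _).2 ⟨fun x y hxy => ?_, fun y => ?_⟩
    · exact mul_left_cancel₀ hs (by simpa [Algebra.smul_def] using hxy)
    · exact ⟨(Ideal.Quotient.mk (Ideal.span {π}) (s : R))⁻¹ * y, by
        simp [Algebra.smul_def, mul_inv_cancel_left₀ hs]⟩
  have : IsSimpleModule R (R ⧸ Ideal.span {π}) :=
    (isSimpleModule_iff_isCoatom).2 (Ideal.isMaximal_def.1 inferInstance)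
  exact (IsLocalizedModule.iso S (LinearMap.id :
    (R ⧸ Ideal.span {π}) →ₗ[R] R ⧸ Ideal.span {π})).length_eq.trans (Module.length_eq_one _ _)

theorem locLength_quot [IsDomain R] [IsPrincipalIdealRing R] {a : R} (ha : a ≠ 0) :
    locLength hπ (R ⧸ Ideal.span {a}) = emultiplicity π a := by
  have hfin := FiniteMultiplicity.of_prime_left hπ ha
  have hpow : ∀ k : ℕ, locLength hπ (R ⧸ Ideal.span {π ^ k}) = k := by
    intro k
    induction k with
    | zero =>
      refine locLength_eq_zero hπ fun m => ⟨1, hπ.not_dvd_one, ?_⟩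
      have : Subsingleton (R ⧸ Ideal.span {π ^ 0}) := by
        rw [Submodule.Quotient.subsingleton_iff, pow_zero, Ideal.span_singleton_one]
      exact Subsingleton.elim _ _
    | succ k ih =>
      rw [pow_succ, locLength_quot_mul hπ hπ.ne_zero, ih, locLength_quot_self]
      simp
  obtain ⟨c, hc, hnd⟩ := hfin.exists_eq_pow_mul_and_not_dvd
  have hc0 : c ≠ 0 := fun h => hnd (h ▸ dvd_zero π)
  have hzero : locLength hπ (R ⧸ Ideal.span {c}) = 0 := by
    refine locLength_eq_zero hπ fun m => ⟨c, hnd, ?_⟩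
    obtain ⟨x, rfl⟩ := Ideal.Quotient.mk_surjective m
    rw [Algebra.smul_def, Ideal.Quotient.algebraMap_eq, ← map_mul]
    exact Ideal.Quotient.eq_zero_iff_mem.2
      (Ideal.mem_span_singleton.2 (dvd_mul_right c x))
  rw [hfin.emultiplicity_eq_multiplicity]
  conv_lhs => rw [hc]
  rw [locLength_quot_mul hπ hc0, hpow, hzero, add_zero]

/-- The localized length computes the `π`-adic valuation of the order of a torsion module. -/
theorem locLength_of_equiv_pi [IsDomain R] [IsPrincipalIdealRing R] {ι : Type*} [Fintype ι]
    {a : ι → R} (ha : ∀ i, a i ≠ 0) (e : M ≃ₗ[R] (∀ i, R ⧸ Ideal.span {a i})) :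
    locLength hπ M = emultiplicity π (∏ i, a i) := by
  rw [locLength_congr hπ e, locLength_pi, Finset.emultiplicity_prod hπ]
  exact Finset.sum_congr rfl fun i _ => locLength_quot hπ (ha i)

end LocLength

/-! ### The order of the cokernel of an injective endomorphism -/

open Module Submodule in
/-- The Smith normal form diagonalizes `ρ` up to composition with automorphisms, so the cokernel
splits into cyclic modules whose annihilators multiply to `det ρ`. -/
theorem exists_coker_decomp {R : Type*} [CommRing R] [IsDomain R] [IsPrincipalIdealRing R]
    {ι : Type*} [Fintype ι] [DecidableEq ι] (ρ : (ι → R) →ₗ[R] (ι → R))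
    (hρ : Function.Injective ρ) :
    ∃ a : ι → R, (∀ i, a i ≠ 0) ∧
      Nonempty (((ι → R) ⧸ LinearMap.range ρ) ≃ₗ[R] (∀ i, R ⧸ Ideal.span {a i})) ∧
      Associated (LinearMap.det ρ) (∏ i, a i) := by
  let b := Pi.basisFun R ι
  let e : (ι → R) ≃ₗ[R] LinearMap.range ρ := LinearEquiv.ofInjective ρ hρ
  have h : finrank R (LinearMap.range ρ) = finrank R (ι → R) := e.symm.finrank_eq
  let a := smithNormalFormCoeffs b h
  let b' := smithNormalFormTopBasis b h
  let ab := smithNormalFormBotBasis b h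
  have ab_eq : ∀ i, (ab i : ι → R) = a i • b' i := smithNormalFormBotBasis_def b h
  refine ⟨a, fun i hi => ?_, ⟨quotientEquivPiSpan _ b h⟩, ?_⟩
  · refine ab.ne_zero i (Subtype.ext ?_)
    rw [ab_eq, hi, zero_smul, ZeroMemClass.coe_zero]
  let e' : (ι → R) ≃ₗ[R] LinearMap.range ρ := b'.equiv ab (Equiv.refl _)
  let f : (ι → R) →ₗ[R] (ι → R) := (LinearMap.range ρ).subtype ∘ₗ e'.toLinearMap
  have hassoc : Associated (LinearMap.det ρ) (LinearMap.det f) :=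
    LinearMap.associated_det_comp_equiv (LinearMap.range ρ).subtype e e'
  have ha : ∀ i, f (b' i) = a i • b' i := fun i => by
    rw [← ab_eq]
    simp [f, e']
  have hdet : LinearMap.det f = ∏ i, a i := by
    rw [← LinearMap.det_toMatrix b', ← Matrix.det_diagonal]
    congr 1
    ext i j
    rw [LinearMap.toMatrix_apply, ha, map_smul, Basis.repr_self, Finsupp.smul_single,
      smul_eq_mul, mul_one]
    by_cases h : i = j
    · rw [h, Matrix.diagonal_apply_eq, Finsupp.single_eq_same]
    · rw [Matrix.diagonal_apply_ne _ h, Finsupp.single_eq_of_ne h]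
  exact hdet ▸ hassoc

/-! ### Laurent polynomials and conjugation -/

/-- `Γ` is a PID, being a localization of `ℚ[X]`. -/
theorem gamma_isPrincipalIdealRing : IsPrincipalIdealRing Γ := by
  refine ⟨fun J => ?_⟩
  rw [← IsLocalization.map_under (Submonoid.powers (Polynomial.X : Polynomial ℚ)) Γ J]
  obtain ⟨x, hx⟩ := (IsPrincipalIdealRing.principal (Ideal.under (Polynomial ℚ) J)).principal
  rw [hx, Ideal.submodule_span_eq, Ideal.map_span, Set.image_singleton]
  exact ⟨⟨_, rfl⟩⟩

/-- The conjugate module has the conjugate order. -/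
theorem IsOrder.conj {N : Type} [AddCommGroup N] [Module Γ N] {g : Γ} (h : IsOrder N g) :
    IsOrder (Conj N) (gammaBar g) := by
  obtain ⟨k, dd, hdd, ⟨e⟩, rfl⟩ := h
  refine ⟨k, fun i => gammaBar (dd i), fun i => by simpa using hdd i, ⟨?_⟩, map_prod _ _ _⟩
  let c : ∀ i, (Γ ⧸ Ideal.span {dd i}) ≃+* (Γ ⧸ Ideal.span {gammaBar (dd i)}) := fun i =>
    Ideal.quotientEquiv _ _ gammaBar.toRingEquiv (by
      rw [Ideal.map_span, Set.image_singleton]; rfl)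
  let E : N ≃+ (∀ i, Γ ⧸ Ideal.span {gammaBar (dd i)}) :=
    e.toAddEquiv.trans (AddEquiv.piCongrRight fun i => (c i).toAddEquiv)
  have hbar : ∀ r : Γ, gammaBar (gammaBar r) = r := fun r => LaurentPolynomial.involutive_invert r
  have hc : ∀ i (r : Γ) (y : Γ ⧸ Ideal.span {dd i}), c i (gammaBar r • y) = r • c i y := by
    intro i r y
    obtain ⟨y, rfl⟩ := Ideal.Quotient.mk_surjective y
    change Ideal.Quotient.mk _ (gammaBar (gammaBar r * y)) =
      Ideal.Quotient.mk _ (r * gammaBar y)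
    rw [map_mul, hbar]
  have hE : ∀ (r : Γ) (x : N), E (gammaBar r • x) = r • E x := by
    intro r x
    funext i
    change c i (e (gammaBar r • x) i) = r • c i (e x i)
    rw [map_smul, Pi.smul_apply, hc]
  exact
    { toFun := fun x => E x
      invFun := fun y => E.symm y
      left_inv := E.left_inv
      right_inv := E.right_inv
      map_add' := fun x y => map_add E x y
      map_smul' := fun r x => hE r x }

/-- Given the four-term exact sequence
`0 → Γ^μ →(ρ,τ) Γ^μ ⊕ \overline{H_n(U^c)} →p H_n(M^c) →q H_n(U^c) → 0`
(with `ρ` injective with torsion cokernel, `e(t) = det ρ`), one has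
`e(t)·δ_n(U,t)·δ_n(U,t⁻¹) = δ_n(M,t)` up to units of `Γ`. -/
theorem statement4 (n d : ℕ) (S : BoundarySetup n d) (htor : S.peripheralTorsion)
    (ρ : (Fin S.chiU.natAbs → Γ) →ₗ[Γ] (Fin S.chiU.natAbs → Γ))
    (τ : (Fin S.chiU.natAbs → Γ) →ₗ[Γ] Conj S.HUn.carrier)
    (p : ((Fin S.chiU.natAbs → Γ) × Conj S.HUn.carrier) →ₗ[Γ] S.HMn.carrier)
    (q : S.HMn.carrier →ₗ[Γ] S.HUn.carrier)
    (h1 : Function.Injective (LinearMap.prod ρ τ))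
    (h2 : LinearMap.range (LinearMap.prod ρ τ) = LinearMap.ker p)
    (h3 : LinearMap.range p = LinearMap.ker q)
    (h4 : Function.Surjective q)
    (h5 : Function.Injective ρ)
    (h6 : Module.IsTorsion Γ ((Fin S.chiU.natAbs → Γ) ⧸ LinearMap.range ρ))
    (δU δM : Γ) (hδU : IsOrder S.HUn.carrier δU) (hδM : IsOrder S.HMn.carrier δM) :
    Associated (LinearMap.det ρ * δU * gammaBar δU) δM := by
  have : IsPrincipalIdealRing Γ := gamma_isPrincipalIdealRing
  obtain ⟨a, ha, ⟨ea⟩, hdet⟩ := exists_coker_decomp ρ h5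
  obtain ⟨kc, dc, hdc, ⟨ec⟩, hbar⟩ := hδU.conj
  obtain ⟨ku, du, hdu, ⟨eu⟩, hu⟩ := hδU
  obtain ⟨km, dm, hdm, ⟨em⟩, hm⟩ := hδM
  have hU0 : δU ≠ 0 := hu ▸ Finset.prod_ne_zero_iff.2 fun i _ => hdu i
  have hB0 : gammaBar δU ≠ 0 := hbar ▸ Finset.prod_ne_zero_iff.2 fun i _ => hdc i
  have hM0 : δM ≠ 0 := hm ▸ Finset.prod_ne_zero_iff.2 fun i _ => hdm i
  have ha0 : ∏ i, a i ≠ 0 := Finset.prod_ne_zero_iff.2 fun i _ => ha i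
  refine ((hdet.mul_right δU).mul_right (gammaBar δU)).trans ?_
  have key : ∀ π : Γ, Prime π →
      emultiplicity π ((∏ i, a i) * δU * gammaBar δU) = emultiplicity π δM := by
    intro π hπ
    let K := LinearMap.range (LinearMap.prod ρ τ)
    have s1 := locLength_add hπ (K.liftQ p h2.le) q
      (LinearMap.ker_eq_bot.1 (Submodule.ker_liftQ_eq_bot _ _ _ h2.ge)) h4
      (LinearMap.exact_iff.2 (by rw [Submodule.range_liftQ, h3]))
    have hle : K ≤ (LinearMap.range ρ).comap (LinearMap.fst Γ _ (Conj S.HUn.carrier)) := by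
      rintro _ ⟨y, rfl⟩
      exact ⟨y, rfl⟩
    have s2 := locLength_add hπ (K.mkQ ∘ₗ LinearMap.inr Γ _ (Conj S.HUn.carrier))
      (K.mapQ (LinearMap.range ρ) (LinearMap.fst Γ _ _) hle) ?_ ?_ ?_
    · rw [emultiplicity_mul hπ, emultiplicity_mul hπ, hm, ← locLength_of_equiv_pi hπ hdm em, s1,
        s2, locLength_of_equiv_pi hπ hdc ec, ← hbar, locLength_of_equiv_pi hπ ha ea,
        locLength_of_equiv_pi hπ hdu eu, ← hu]
      ring
    · refine (injective_iff_map_eq_zero _).2 fun x hx => ?_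
      obtain ⟨y, hy⟩ := (Submodule.Quotient.mk_eq_zero K).1 hx
      have hy1 : ρ y = 0 := congrArg Prod.fst hy
      have hy2 : τ y = x := congrArg Prod.snd hy
      rw [← hy2, (injective_iff_map_eq_zero ρ).1 h5 y hy1, map_zero]
    · intro z
      obtain ⟨v, rfl⟩ := Submodule.Quotient.mk_surjective _ z
      exact ⟨Submodule.Quotient.mk (v, 0), rfl⟩
    · intro z
      obtain ⟨⟨v, x⟩, rfl⟩ := Submodule.Quotient.mk_surjective _ z
      constructor
      · intro hz
        obtain ⟨y, hy⟩ := (Submodule.Quotient.mk_eq_zero (LinearMap.range ρ)).1 hz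
        have hy' : ρ y = v := hy
        -- Modulo `(ρ y, τ y)`, the pair `(ρ y, x)` is `(0, x - τ y)`.
        refine ⟨x - τ y, (Submodule.Quotient.eq K).2 ⟨-y, ?_⟩⟩
        refine Prod.ext ?_ ?_
        · simp [hy']
        · simp
      · rintro ⟨w, hw⟩
        rw [← hw]
        exact (Submodule.Quotient.mk_eq_zero (LinearMap.range ρ)).2 (zero_mem _)
  exact associated_of_dvd_dvd
    ((UniqueFactorizationMonoid.dvd_iff_emultiplicity_le
      (mul_ne_zero (mul_ne_zero ha0 hU0) hB0)).2 fun π hπ => (key π hπ).le)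
    ((UniqueFactorizationMonoid.dvd_iff_emultiplicity_le hM0).2 fun π hπ => (key π hπ).ge)
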